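/- On the Lie algebra L₆,₁, with ω = e¹⁴ + e²⁵ - e³⁶ and ρ = -e¹²⁶ - e¹³⁵ + e²³⁴ + e⁴⁵⁶, one has ω ∧ ρ = 0. -/

import Mathlib

/-!
STATEMENT 9: On the Lie algebra L₆,₁, with ω = e¹⁴ + e²⁵ - e³⁶ and
ρ = -e¹²⁶ - e¹³⁵ + e²³⁴ + e⁴⁵⁶, one has ω ∧ ρ = 0.

Model: indices shifted to 0,…,5; forms encoded by their values on basis tuples;
the wedge of a 2-form and a 3-form is computed by the shuffle formula
(ω∧ρ)(x₁,…,x₅) = (1/(2!·3!)) Σ_{σ∈S₅} sign(σ) ω(x_{σ(1)},x_{σ(2)}) ρ(x_{σ(3)},x_{σ(4)},x_{σ(5)}).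
(The statement ω∧ρ = 0 only involves the forms, not the Lie bracket.)
-/

/-- Value of e^a ∧ e^b on (e_i, e_j). -/
def wf (a b i j : Fin 6) : ℝ :=
  (if a = i then (1:ℝ) else 0) * (if b = j then (1:ℝ) else 0) -
  (if a = j then (1:ℝ) else 0) * (if b = i then (1:ℝ) else 0)

/-- Value of e^a ∧ e^b ∧ e^c on (e_i, e_j, e_k). -/
def tf (a b c i j k : Fin 6) : ℝ :=
  (if a = i then (1:ℝ) else 0) * ((if b = j then (1:ℝ) else 0) * (if c = k then (1:ℝ) else 0)
      - (if b = k then (1:ℝ) else 0) * (if c = j then (1:ℝ) else 0))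
  - (if a = j then (1:ℝ) else 0) * ((if b = i then (1:ℝ) else 0) * (if c = k then (1:ℝ) else 0)
      - (if b = k then (1:ℝ) else 0) * (if c = i then (1:ℝ) else 0))
  + (if a = k then (1:ℝ) else 0) * ((if b = i then (1:ℝ) else 0) * (if c = j then (1:ℝ) else 0)
      - (if b = j then (1:ℝ) else 0) * (if c = i then (1:ℝ) else 0))

/-- Coefficients of ω = e¹⁴ + e²⁵ - e³⁶. -/
def omL61 (i j : Fin 6) : ℝ := wf 0 3 i j + wf 1 4 i j - wf 2 5 i j

/-- Coefficients of ρ = -e¹²⁶ - e¹³⁵ + e²³⁴ + e⁴⁵⁶. -/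
def rhoL61 (i j k : Fin 6) : ℝ :=
  -(tf 0 1 5 i j k) - tf 0 2 4 i j k + tf 1 2 3 i j k + tf 3 4 5 i j k

/-- Basis values of the wedge product ω∧ρ. -/
noncomputable def omrho (a b c d e : Fin 6) : ℝ :=
  (1/12 : ℝ) * ∑ σ : Equiv.Perm (Fin 5),
    ((Equiv.Perm.sign σ : ℤ) : ℝ) *
      omL61 (![a,b,c,d,e] (σ 0)) (![a,b,c,d,e] (σ 1)) *
        rhoL61 (![a,b,c,d,e] (σ 2)) (![a,b,c,d,e] (σ 3)) (![a,b,c,d,e] (σ 4))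

/-- Determinant expansion: it vanishes if two of the one-forms coincide. -/
theorem detSum_zero (x : Fin 5 → Fin 6) (p q u v w : Fin 6)
    (h : p = q ∨ p = u ∨ p = v ∨ p = w ∨ q = u ∨ q = v ∨ q = w ∨ u = v ∨ u = w ∨ v = w) :
    ∑ σ : Equiv.Perm (Fin 5), ((Equiv.Perm.sign σ : ℤ) : ℝ) *
      ((if p = x (σ 0) then (1:ℝ) else 0) * (if q = x (σ 1) then (1:ℝ) else 0) *
       (if u = x (σ 2) then (1:ℝ) else 0) * (if v = x (σ 3) then (1:ℝ) else 0) *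
       (if w = x (σ 4) then (1:ℝ) else 0)) = 0 := by
  have key : ∀ i j : Fin 5, i ≠ j → ![p, q, u, v, w] i = ![p, q, u, v, w] j →
      (Matrix.of fun (a b : Fin 5) =>
        if ![p, q, u, v, w] b = x a then (1:ℝ) else 0).det = 0 := by
    intro i j hij he
    refine Matrix.det_zero_of_column_eq hij ?_
    intro k
    simp only [Matrix.of_apply, he]
  have hd : (Matrix.of fun (a b : Fin 5) =>
        if ![p, q, u, v, w] b = x a then (1:ℝ) else 0).det = 0 := by
    rcases h with h | h | h | h | h | h | h | h | h | h
    · exact key 0 1 (by decide) h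
    · exact key 0 2 (by decide) h
    · exact key 0 3 (by decide) h
    · exact key 0 4 (by decide) h
    · exact key 1 2 (by decide) h
    · exact key 1 3 (by decide) h
    · exact key 1 4 (by decide) h
    · exact key 2 3 (by decide) h
    · exact key 2 4 (by decide) h
    · exact key 3 4 (by decide) h
  rw [Matrix.det_apply'] at hd
  refine Eq.trans ?_ hd
  refine Finset.sum_congr rfl fun σ _ => ?_
  rw [Fin.prod_univ_five]
  rfl

/-- The wedge of a decomposable 2-form and 3-form sharing a factor vanishes. -/
theorem wedge_zero (x : Fin 5 → Fin 6) (p q u v w : Fin 6)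
    (h : p = u ∨ p = v ∨ p = w ∨ q = u ∨ q = v ∨ q = w) :
    ∑ σ : Equiv.Perm (Fin 5), ((Equiv.Perm.sign σ : ℤ) : ℝ) *
      (wf p q (x (σ 0)) (x (σ 1)) * tf u v w (x (σ 2)) (x (σ 3)) (x (σ 4))) = 0 := by
  have D := detSum_zero x
  have h1 := D p q u v w (by tauto)
  have h2 := D p q u w v (by tauto)
  have h3 := D p q v u w (by tauto)
  have h4 := D p q w u v (by tauto)
  have h5 := D p q v w u (by tauto)
  have h6 := D p q w v u (by tauto)
  have h7 := D q p u v w (by tauto)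
  have h8 := D q p u w v (by tauto)
  have h9 := D q p v u w (by tauto)
  have h10 := D q p w u v (by tauto)
  have h11 := D q p v w u (by tauto)
  have h12 := D q p w v u (by tauto)
  have e : ∀ A B C : ℝ, A = 0 → B = 0 → C = A - B → C = 0 := by
    intro A B C hA hB hC
    rw [hC, hA, hB, sub_zero]
  refine e _ _ _ ((congrArg₂ (· + ·) (congrArg₂ (· + ·) (congrArg₂ (· + ·) (congrArg₂ (· + ·) (congrArg₂ (· + ·) h1 h4) h5) h8) h9) h12).trans (by norm_num)) ((congrArg₂ (· + ·) (congrArg₂ (· + ·) (congrArg₂ (· + ·) (congrArg₂ (· + ·) (congrArg₂ (· + ·) h2 h3) h6) h7) h10) h11).trans (by norm_num)) ?_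
  simp only [← Finset.sum_add_distrib, ← Finset.sum_sub_distrib]
  refine Finset.sum_congr rfl fun σ _ => ?_
  unfold wf tf
  ring

/-- ω ∧ ρ = 0 on L₆,₁. -/
theorem L61_omega_wedge_rho : ∀ a b c d e : Fin 6, omrho a b c d e = 0 := by
  intro a b c d e
  have W := wedge_zero ![a, b, c, d, e]

  have w00 := W 0 3 0 1 5 (by decide)
  have w01 := W 0 3 0 2 4 (by decide)
  have w02 := W 0 3 1 2 3 (by decide)
  have w03 := W 0 3 3 4 5 (by decide)
  have w10 := W 1 4 0 1 5 (by decide)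
  have w11 := W 1 4 0 2 4 (by decide)
  have w12 := W 1 4 1 2 3 (by decide)
  have w13 := W 1 4 3 4 5 (by decide)
  have w20 := W 2 5 0 1 5 (by decide)
  have w21 := W 2 5 0 2 4 (by decide)
  have w22 := W 2 5 1 2 3 (by decide)
  have w23 := W 2 5 3 4 5 (by decide)
  have f : ∀ A B C : ℝ, A = 0 → B = 0 → C = A - B → C = 0 := by
    intro A B C hA hB hC
    rw [hC, hA, hB, sub_zero]
  unfold omrho
  refine mul_eq_zero_of_right _ ?_
  refine f _ _ _ ((congrArg₂ (· + ·) (congrArg₂ (· + ·) (congrArg₂ (· + ·) (congrArg₂ (· + ·) (congrArg₂ (· + ·) w02 w03) w12) w13) w20) w21).trans (by norm_num)) ((congrArg₂ (· + ·) (congrArg₂ (· + ·) (congrArg₂ (· + ·) (congrArg₂ (· + ·) (congrArg₂ (· + ·) w00 w01) w10) w11) w22) w23).trans (by norm_num)) ?_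
  simp only [← Finset.sum_add_distrib, ← Finset.sum_sub_distrib]
  refine Finset.sum_congr rfl fun σ _ => ?_
  unfold omL61 rhoL61
  ring
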